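/- arXiv:1105.4489 — 2 statements merged into one kernel-verified Lean document; each statement's English description precedes it below -/
import Mathlib

section
/- The 7-dimensional nilpotent Lie algebra g_{2.2} is not an Einstein nilradical. -/
open Matrix BigOperators Polynomial

noncomputable section

abbrev Law (n : ℕ) := (Fin n → ℝ) → (Fin n → ℝ) → (Fin n → ℝ)

/-- `i`-th canonical basis vector of `ℝ^n`. -/
def bVec {n : ℕ} (i : Fin n) : Fin n → ℝ := Pi.single i 1

def IsBilin {n : ℕ} (μ : Law n) : Prop :=
  (∀ X, IsLinearMap ℝ (μ X)) ∧ (∀ Y, IsLinearMap ℝ (fun X => μ X Y))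

def IsSkew {n : ℕ} (μ : Law n) : Prop := ∀ X Y, μ X Y = - μ Y X

def IsJacobi {n : ℕ} (μ : Law n) : Prop :=
  ∀ X Y Z, μ (μ X Y) Z + μ (μ Y Z) X + μ (μ Z X) Y = 0

def IsLieLaw {n : ℕ} (μ : Law n) : Prop := IsBilin μ ∧ IsSkew μ ∧ IsJacobi μ

/-- lower central series of the law `μ`. -/
def lcs {n : ℕ} (μ : Law n) : ℕ → Submodule ℝ (Fin n → ℝ)
  | 0 => ⊤
  | k + 1 => Submodule.span ℝ {z | ∃ x y, y ∈ lcs μ k ∧ z = μ x y}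

def IsNilpotentLaw {n : ℕ} (μ : Law n) : Prop :=
  IsLieLaw μ ∧ ∃ k, lcs μ k = ⊥

/-- the action of `GL_n(ℝ)` on laws: `(g·μ)(X,Y) = g μ(g⁻¹X, g⁻¹Y)`. -/
def act {n : ℕ} (g : GL (Fin n) ℝ) (μ : Law n) : Law n :=
  fun X Y =>
    (g : Matrix (Fin n) (Fin n) ℝ).mulVec
      (μ (((g⁻¹ : GL (Fin n) ℝ) : Matrix (Fin n) (Fin n) ℝ).mulVec X)
         (((g⁻¹ : GL (Fin n) ℝ) : Matrix (Fin n) (Fin n) ℝ).mulVec Y))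

def IsDerivation {n : ℕ} (μ : Law n) (ψ : Matrix (Fin n) (Fin n) ℝ) : Prop :=
  ∀ X Y, ψ.mulVec (μ X Y) = μ (ψ.mulVec X) Y + μ X (ψ.mulVec Y)

/-- the unnormalized moment map `m(μ) = 4 Ric_μ`, as a matrix in the canonical basis. -/
def momentMap {n : ℕ} (μ : Law n) : Matrix (Fin n) (Fin n) ℝ :=
  Matrix.of fun k l =>
    4 * (-(1/2) * ∑ i, ∑ j, μ (bVec k) (bVec i) j * μ (bVec l) (bVec i) j
      + (1/4) * ∑ i, ∑ j, μ (bVec i) (bVec j) k * μ (bVec i) (bVec j) l)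

def IsEinsteinNilradical {n : ℕ} (μ : Law n) : Prop :=
  ∃ g : GL (Fin n) ℝ, ∃ c : ℝ, ∃ φ : Matrix (Fin n) (Fin n) ℝ,
    c < 0 ∧ φ.IsSymm ∧ IsDerivation (act g μ) φ ∧
    momentMap (act g μ) = c • (1 : Matrix (Fin n) (Fin n) ℝ) + φ

/-- build a (bilinear) law from a table `c` of structure constants on the
canonical basis, antisymmetrized: `[e_i, e_j] = c i j - c j i`. -/
def mkLaw {n : ℕ} (c : Fin n → Fin n → Fin n → ℝ) : Law n :=
  fun X Y k => ∑ i, ∑ j, X i * Y j * (c i j k - c j i k)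

/-- structure constants of `g_{2.2}`. -/
def c22 : Fin 7 → Fin 7 → Fin 7 → ℝ := fun i j =>
  if i = 0 ∧ j = 1 then Pi.single 4 1
  else if i = 0 ∧ j = 2 then Pi.single 5 1
  else if i = 0 ∧ j = 3 then Pi.single 6 2
  else if i = 1 ∧ j = 2 then Pi.single 3 1
  else if i = 1 ∧ j = 5 then Pi.single 6 1
  else if i = 2 ∧ j = 4 then Pi.single 6 (-1)
  else if i = 2 ∧ j = 5 then Pi.single 6 1
  else 0

/-- the Lie algebra law of `g_{2.2}`. -/
def law22 : Law 7 := mkLaw c22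


/-!
The moment map is equivariant under orthogonal changes of basis, so by the QR decomposition the
matrix `T` bringing `law22` to Einstein form may be taken triangular with respect to a full flag
preserved by all derivations. The derivation in the Einstein condition is then both triangular and
symmetric, hence diagonal, with the same diagonal entries as a derivation `D` of `law22`.

For a diagonal matrix `A = diag(a)`, the trace of `A` against the moment map of `ν = act T law22` is
the sum of the squares of the structure constants of `ν` weighted by `a_k - a_i - a_j`. Take
`a = (0, -1, 1, 0, -1, 1, 0)`, with indices from `0`. Since every derivation of `law22` has
`D_11 = D_22` and `D_44 = D_55`, the trace vanishes. The only structure constant of `ν` that could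
have positive weight is that of `e_6` in `[e_0, e_1]`, and it is killed by the vanishing of the
off-diagonal entries of the moment map in the column of the central vector `e_6`. So all terms
vanish and `A` is a derivation of `ν`; conjugating back by `T` gives a derivation of `law22` with
diagonal entries `-1` and `1` at positions `1` and `2`, a contradiction.
-/

section Triangular

variable {ι α R : Type*} [LinearOrder α] {b : ι → α}

theorem isDiag_of_blockTriangular_of_isSymm [Zero R] {A : Matrix ι ι R} (hb : b.Injective)
    (hA : A.BlockTriangular b) (hsymm : A.IsSymm) : A.IsDiag := by
  intro i j hij
  rcases lt_or_gt_of_ne (hb.ne hij) with h | h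
  · rw [← hsymm.apply, hA h]
  · exact hA h

theorem le_of_blockTriangular_apply_ne_zero [Zero R] {M : Matrix ι ι R} (hM : M.BlockTriangular b)
    {i j : ι} (h : M i j ≠ 0) : b i ≤ b j :=
  not_lt.1 fun hlt => h (hM hlt)

variable [Fintype ι]

theorem blockTriangular_mul_apply_self [NonUnitalNonAssocSemiring R] {A B : Matrix ι ι R}
    (hb : b.Injective) (hA : A.BlockTriangular b) (hB : B.BlockTriangular b) (i : ι) :
    (A * B) i i = A i i * B i i := by
  rw [Matrix.mul_apply]
  refine Finset.sum_eq_single i (fun j _ hji => ?_) (by simp)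
  rcases lt_or_gt_of_ne (hb.ne hji) with h | h
  · rw [hA h, zero_mul]
  · rw [hB h, mul_zero]

variable [DecidableEq ι]

theorem blockTriangular_units_inv [CommRing R] {T : GL ι R} (hT : T.val.BlockTriangular b) :
    T⁻¹.val.BlockTriangular b := by
  have : Invertible T.val := T.invertible
  rw [Matrix.coe_units_inv]
  exact Matrix.blockTriangular_inv_of_blockTriangular hT

theorem blockTriangular_units_apply_self_mul_inv [CommRing R] {T : GL ι R} (hb : b.Injective)
    (hT : T.val.BlockTriangular b) (i : ι) : T.val i i * T⁻¹.val i i = 1 := by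
  rw [← blockTriangular_mul_apply_self hb hT (blockTriangular_units_inv hT), Units.mul_inv,
    Matrix.one_apply_eq]

theorem blockTriangular_conj_apply_self [CommRing R] {T : GL ι R} {A : Matrix ι ι R}
    (hb : b.Injective) (hT : T.val.BlockTriangular b) (hA : A.BlockTriangular b) (i : ι) :
    (T.val * A * T⁻¹.val) i i = A i i := by
  rw [blockTriangular_mul_apply_self hb (hT.mul hA) (blockTriangular_units_inv hT),
    blockTriangular_mul_apply_self hb hT hA, mul_right_comm,
    blockTriangular_units_apply_self_mul_inv hb hT, one_mul]

theorem units_inv_eq_transpose {K : GL ι ℝ} (hK : K.val ∈ Matrix.orthogonalGroup ι ℝ) :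
    K⁻¹.val = K.valᵀ :=
  Units.inv_eq_of_mul_eq_one_right ((Matrix.mem_orthogonalGroup_iff _ _).1 hK)

theorem exists_orthogonal_mul_blockTriangular (hb : b.Injective) (g : Matrix ι ι ℝ) :
    ∃ K : GL ι ℝ, K.val ∈ Matrix.orthogonalGroup ι ℝ ∧ (K.val * g).BlockTriangular b := by
  let _ : LinearOrder ι := LinearOrder.lift' b hb
  let _ : LocallyFiniteOrderBot ι :=
    LocallyFiniteOrderBot.ofIic ι (fun j => Finset.univ.filter (· ≤ j)) (by simp)
  let e := EuclideanSpace.basisFun ι ℝ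
  let f (j : ι) : EuclideanSpace ℝ ι := WithLp.toLp 2 fun i => g i j
  let u := InnerProductSpace.gramSchmidtOrthonormalBasis (𝕜 := ℝ) finrank_euclideanSpace f
  let K : Matrix ι ι ℝ := u.toBasis.toMatrix e.toBasis
  have hK : K * Kᵀ = 1 := (Matrix.mem_orthogonalGroup_iff _ _).1
    (u.toMatrix_orthonormalBasis_mem_orthogonal e)
  have hKg : K * g = u.toBasis.toMatrix f := by
    have hg : g = e.toBasis.toMatrix f := by
      ext i j
      simp [Module.Basis.toMatrix_apply, e, f]
    rw [hg, Module.Basis.toMatrix_mul_toMatrix]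
  refine ⟨⟨K, Kᵀ, hK, mul_eq_one_comm.1 hK⟩, (Matrix.mem_orthogonalGroup_iff _ _).2 hK, ?_⟩
  rw [hKg]
  exact InnerProductSpace.gramSchmidtOrthonormalBasis_inv_isUpperTriangular _ f

end Triangular

variable {n : ℕ}

section StructureConstants

variable {μ : Law n}

/-- Structure constants of a law in the canonical basis:
`μ(e_i, e_j) = ∑ k, structConst μ i j k e_k`. -/
def structConst (μ : Law n) (i j k : Fin n) : ℝ := μ (bVec i) (bVec j) k

theorem IsSkew.structConst_swap (hμ : IsSkew μ) (i j k : Fin n) :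
    structConst μ j i k = -structConst μ i j k :=
  congrFun (hμ (bVec j) (bVec i)) k

theorem IsSkew.structConst_self (hμ : IsSkew μ) (i k : Fin n) : structConst μ i i k = 0 :=
  self_eq_neg.1 (hμ.structConst_swap i i k)

theorem IsBilin.apply_eq_sum (hμ : IsBilin μ) (X Y : Fin n → ℝ) (k : Fin n) :
    μ X Y k = ∑ i, ∑ j, X i * Y j * structConst μ i j k := by
  let B : (Fin n → ℝ) →ₗ[ℝ] (Fin n → ℝ) →ₗ[ℝ] (Fin n → ℝ) :=
    LinearMap.mk₂ ℝ μ (fun _ _ Y => (hμ.2 Y).map_add _ _) (fun _ _ Y => (hμ.2 Y).map_smul _ _)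
      (fun X => (hμ.1 X).map_add) (fun c X => (hμ.1 X).map_smul c)
  have hexpand (Z : Fin n → ℝ) : Z = ∑ i, Z i • bVec i := pi_eq_sum_univ' Z
  calc μ X Y k = B (∑ i, X i • bVec i) (∑ j, Y j • bVec j) k := by
        rw [← hexpand, ← hexpand]; rfl
    _ = ∑ i, ∑ j, X i * Y j * B (bVec i) (bVec j) k := by
        simp only [map_sum, map_smul, LinearMap.sum_apply, LinearMap.smul_apply, Finset.sum_apply,
          Pi.smul_apply, smul_eq_mul, Finset.mul_sum]
        rw [Finset.sum_comm]
        exact Finset.sum_congr rfl fun i _ => Finset.sum_congr rfl fun j _ => by ring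

protected theorem IsBilin.act (hμ : IsBilin μ) (g : GL (Fin n) ℝ) : IsBilin (act g μ) := by
  refine ⟨fun X => ⟨fun Y Z => ?_, fun c Y => ?_⟩, fun Y => ⟨fun X Z => ?_, fun c X => ?_⟩⟩
  · simp only [act, Matrix.mulVec_add, (hμ.1 _).map_add]
  · simp only [act, Matrix.mulVec_smul, (hμ.1 _).map_smul]
  · simp only [act, Matrix.mulVec_add, (hμ.2 _).map_add]
  · simp only [act, Matrix.mulVec_smul, (hμ.2 _).map_smul]

protected theorem IsSkew.act (hμ : IsSkew μ) (g : GL (Fin n) ℝ) : IsSkew (act g μ) := by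
  intro X Y
  simp only [act]
  rw [hμ, Matrix.mulVec_neg]

theorem act_mul (g h : GL (Fin n) ℝ) (μ : Law n) : act (g * h) μ = act g (act h μ) := by
  funext X Y
  simp only [act, Matrix.mulVec_mulVec, ← Units.val_mul, _root_.mul_inv_rev]

theorem IsBilin.structConst_act (hμ : IsBilin μ) (g : GL (Fin n) ℝ) (i j k : Fin n) :
    structConst (act g μ) i j k =
      ∑ p, ∑ q, ∑ l, g.val k l * g⁻¹.val p i * g⁻¹.val q j * structConst μ p q l := by
  have hact : structConst (act g μ) i j k =
      ∑ l, g.val k l * μ (g⁻¹.val.col i) (g⁻¹.val.col j) l := by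
    simp only [structConst, act, bVec, Matrix.mulVec_single_one]
    rfl
  simp only [hact, hμ.apply_eq_sum, Matrix.col_apply, Finset.mul_sum, ← mul_assoc]
  rw [Finset.sum_comm_cycle, Finset.sum_comm_cycle]

theorem IsDerivation.of_act {g : GL (Fin n) ℝ} {φ : Matrix (Fin n) (Fin n) ℝ}
    (h : IsDerivation (act g μ) φ) : IsDerivation μ (g⁻¹.val * φ * g.val) := by
  intro X Y
  have hXY := congrArg (g⁻¹.val *ᵥ ·) (h (g.val *ᵥ X) (g.val *ᵥ Y))
  simpa [act, Matrix.mulVec_add, Matrix.mulVec_mulVec, Matrix.mul_assoc] using hXY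

theorem IsDerivation.mulVec_bracket {D : Matrix (Fin n) (Fin n) ℝ} (hD : IsDerivation μ D)
    (i j : Fin n) :
    D *ᵥ μ (bVec i) (bVec j) = μ (D.col i) (bVec j) + μ (bVec i) (D.col j) := by
  simpa only [bVec, mulVec_single_one] using hD (bVec i) (bVec j)

theorem isBilin_mkLaw (c : Fin n → Fin n → Fin n → ℝ) : IsBilin (mkLaw c) := by
  refine ⟨fun X => ⟨fun Y Z => ?_, fun r Y => ?_⟩, fun Y => ⟨fun X Z => ?_, fun r X => ?_⟩⟩ <;>
    funext k <;>
    simp only [mkLaw, Pi.add_apply, Pi.smul_apply, smul_eq_mul, Finset.mul_sum,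
      ← Finset.sum_add_distrib] <;>
    exact Finset.sum_congr rfl fun i _ => Finset.sum_congr rfl fun j _ => by ring

theorem isSkew_mkLaw (c : Fin n → Fin n → Fin n → ℝ) : IsSkew (mkLaw c) := by
  intro X Y
  funext k
  simp only [mkLaw, Pi.neg_apply, ← Finset.sum_neg_distrib]
  rw [Finset.sum_comm]
  exact Finset.sum_congr rfl fun i _ => Finset.sum_congr rfl fun j _ => by ring

theorem structConst_mkLaw (c : Fin n → Fin n → Fin n → ℝ) (i j k : Fin n) :
    structConst (mkLaw c) i j k = c i j k - c j i k := by
  simp [structConst, mkLaw, bVec, Pi.single_apply]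

end StructureConstants

section MomentMap

open scoped Kronecker

variable {μ : Law n}

/-- The `n × n²` matrix with entries `μ(e_i, e_j)_k` in row `k` and column `(i, j)`; its Gram
matrix is the positive part of the moment map. -/
def bracketMatrix (μ : Law n) : Matrix (Fin n) (Fin n × Fin n) ℝ :=
  Matrix.of fun k p => structConst μ p.1 p.2 k

/-- The `n × n²` matrix whose row `k` lists the entries `μ(e_k, e_i)_j` of `ad e_k`; half the
negative part of the moment map is its Gram matrix. -/
def adMatrix (μ : Law n) : Matrix (Fin n) (Fin n × Fin n) ℝ :=
  Matrix.of fun k p => structConst μ k p.1 p.2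

theorem momentMap_eq_gram (μ : Law n) :
    momentMap μ =
      bracketMatrix μ * (bracketMatrix μ)ᵀ - (2 : ℝ) • (adMatrix μ * (adMatrix μ)ᵀ) := by
  ext k l
  simp only [momentMap, Matrix.of_apply, Matrix.sub_apply, Matrix.smul_apply, Matrix.mul_apply,
    Fintype.sum_prod_type, Matrix.transpose_apply, bracketMatrix, adMatrix, structConst,
    smul_eq_mul]
  ring

theorem momentMap_apply (μ : Law n) (k l : Fin n) :
    momentMap μ k l = ∑ i, ∑ j, structConst μ i j k * structConst μ i j l -
      2 * ∑ i, ∑ j, structConst μ k i j * structConst μ l i j := by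
  simp only [momentMap, Matrix.of_apply, structConst]
  ring

theorem momentMap_apply_of_central {l : Fin n} (h : ∀ i j, structConst μ l i j = 0)
    (k : Fin n) :
    momentMap μ k l = ∑ i, ∑ j, structConst μ i j k * structConst μ i j l := by
  simp [momentMap_apply, h]

theorem IsBilin.bracketMatrix_act (hμ : IsBilin μ) (g : GL (Fin n) ℝ) :
    bracketMatrix (act g μ) = g.val * bracketMatrix μ * (g⁻¹.val ⊗ₖ g⁻¹.val) := by
  ext k ⟨i, j⟩
  simp only [bracketMatrix, Matrix.of_apply, hμ.structConst_act, Matrix.mul_apply,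
    Fintype.sum_prod_type, Matrix.kroneckerMap_apply, Finset.sum_mul]
  exact Finset.sum_congr rfl fun p _ => Finset.sum_congr rfl fun q _ =>
    Finset.sum_congr rfl fun l _ => by ring

theorem IsBilin.adMatrix_act (hμ : IsBilin μ) (g : GL (Fin n) ℝ) :
    adMatrix (act g μ) = g⁻¹.valᵀ * adMatrix μ * (g⁻¹.val ⊗ₖ g.valᵀ) := by
  ext k ⟨i, j⟩
  simp only [adMatrix, Matrix.of_apply, hμ.structConst_act, Matrix.mul_apply,
    Fintype.sum_prod_type, Matrix.kroneckerMap_apply, Finset.sum_mul, Matrix.transpose_apply]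
  rw [← Finset.sum_comm_cycle]
  exact Finset.sum_congr rfl fun p _ => Finset.sum_congr rfl fun q _ =>
    Finset.sum_congr rfl fun l _ => by ring

theorem gram_conj_of_orthogonal {ι κ : Type*} [Fintype ι] [Fintype κ] [DecidableEq κ]
    (K : Matrix ι ι ℝ) (M : Matrix ι κ ℝ) {U : Matrix κ κ ℝ}
    (hU : U ∈ Matrix.orthogonalGroup κ ℝ) :
    K * M * U * (K * M * U)ᵀ = K * (M * Mᵀ) * Kᵀ := by
  have hU' := (Matrix.mem_orthogonalGroup_iff _ _).1 hU
  calc K * M * U * (K * M * U)ᵀ = K * M * (U * Uᵀ) * Mᵀ * Kᵀ := by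
        simp only [Matrix.transpose_mul, Matrix.mul_assoc]
    _ = K * (M * Mᵀ) * Kᵀ := by simp only [hU', Matrix.mul_one, Matrix.mul_assoc]

theorem IsBilin.momentMap_act_of_orthogonal (hμ : IsBilin μ) {K : GL (Fin n) ℝ}
    (hK : K.val ∈ Matrix.orthogonalGroup (Fin n) ℝ) :
    momentMap (act K μ) = K.val * momentMap μ * K⁻¹.val := by
  have hKinv := units_inv_eq_transpose hK
  have hKK : K.valᵀ ⊗ₖ K.valᵀ ∈ Matrix.orthogonalGroup (Fin n × Fin n) ℝ := by
    have := Matrix.transpose_mem_unitaryGroup_iff.2 hK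
    exact Matrix.kronecker_mem_unitary this this
  simp only [momentMap_eq_gram, hμ.bracketMatrix_act, hμ.adMatrix_act, hKinv,
    Matrix.transpose_transpose, gram_conj_of_orthogonal _ _ hKK, Matrix.mul_sub, Matrix.sub_mul,
    Matrix.mul_smul, Matrix.smul_mul]

theorem IsSkew.sum_mul_momentMap_diag (hμ : IsSkew μ) (a : Fin n → ℝ) :
    ∑ k, a k * momentMap μ k k =
      ∑ i, ∑ j, ∑ k, (a k - a i - a j) * structConst μ i j k ^ 2 := by
  have hi : ∑ k, a k * ∑ i, ∑ j, structConst μ i j k ^ 2 =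
      ∑ i, ∑ j, ∑ k, a k * structConst μ i j k ^ 2 := by
    simp only [Finset.mul_sum]
    rw [Finset.sum_comm]
    exact Finset.sum_congr rfl fun i _ => Finset.sum_comm
  have hj : ∑ i, ∑ j, ∑ k, a j * structConst μ i j k ^ 2 =
      ∑ i, ∑ j, ∑ k, a i * structConst μ i j k ^ 2 := by
    rw [Finset.sum_comm]
    refine Finset.sum_congr rfl fun i _ => Finset.sum_congr rfl fun j _ => ?_
    simp only [hμ.structConst_swap i j, neg_sq]
  calc ∑ k, a k * momentMap μ k k
      = ∑ k, a k * ∑ i, ∑ j, structConst μ i j k ^ 2 -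
          2 * ∑ i, ∑ j, ∑ k, a i * structConst μ i j k ^ 2 := by
        simp only [momentMap_apply, ← sq, mul_sub, Finset.sum_sub_distrib, Finset.mul_sum,
          mul_left_comm (2 : ℝ)]
    _ = ∑ i, ∑ j, ∑ k, (a k - a i - a j) * structConst μ i j k ^ 2 := by
        simp only [sub_mul, Finset.sum_sub_distrib, hi, hj]
        ring

end MomentMap

section TriangularAction

variable {μ : Law n} {α : Type*} [LinearOrder α] {b : Fin n → α} {T : GL (Fin n) ℝ}

theorem IsBilin.structConst_act_eq_sum_prod (hμ : IsBilin μ) (g : GL (Fin n) ℝ) (i j k : Fin n) :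
    structConst (act g μ) i j k = ∑ t : Fin n × Fin n × Fin n,
      g.val k t.2.2 * g⁻¹.val t.1 i * g⁻¹.val t.2.1 j * structConst μ t.1 t.2.1 t.2.2 := by
  simp only [hμ.structConst_act, Fintype.sum_prod_type]

theorem IsBilin.structConst_act_eq_zero (hμ : IsBilin μ) (hT : T.val.BlockTriangular b)
    {i j k : Fin n}
    (h : ∀ p q l, structConst μ p q l ≠ 0 → b p ≤ b i → b q ≤ b j → ¬b k ≤ b l) :
    structConst (act T μ) i j k = 0 := by
  have hT' := blockTriangular_units_inv hT
  rw [hμ.structConst_act_eq_sum_prod]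
  refine Finset.sum_eq_zero fun t _ => ?_
  by_contra hne
  obtain ⟨⟨⟨hk, hi⟩, hj⟩, hc⟩ := by simpa only [mul_ne_zero_iff] using hne
  exact h _ _ _ hc (le_of_blockTriangular_apply_ne_zero hT' hi)
    (le_of_blockTriangular_apply_ne_zero hT' hj) (le_of_blockTriangular_apply_ne_zero hT hk)

theorem IsBilin.structConst_act_leading (hμ : IsBilin μ) (hT : T.val.BlockTriangular b)
    {i j k : Fin n}
    (h : ∀ p q l, structConst μ p q l ≠ 0 → b p ≤ b i → b q ≤ b j → b k ≤ b l →
      (p, q, l) = (i, j, k)) :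
    structConst (act T μ) i j k =
      T.val k k * T⁻¹.val i i * T⁻¹.val j j * structConst μ i j k := by
  have hT' := blockTriangular_units_inv hT
  rw [hμ.structConst_act_eq_sum_prod]
  refine Finset.sum_eq_single (i, j, k) (fun t _ ht => ?_) (by simp)
  by_contra hne
  obtain ⟨⟨⟨hk, hi⟩, hj⟩, hc⟩ := by simpa only [mul_ne_zero_iff] using hne
  exact ht <| h _ _ _ hc (le_of_blockTriangular_apply_ne_zero hT' hi)
    (le_of_blockTriangular_apply_ne_zero hT' hj) (le_of_blockTriangular_apply_ne_zero hT hk)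

theorem IsBilin.structConst_act_ne_zero (hμ : IsBilin μ) (hb : b.Injective)
    (hT : T.val.BlockTriangular b) {i j k : Fin n} (hijk : structConst μ i j k ≠ 0)
    (h : ∀ p q l, structConst μ p q l ≠ 0 → b p ≤ b i → b q ≤ b j → b k ≤ b l →
      (p, q, l) = (i, j, k)) :
    structConst (act T μ) i j k ≠ 0 := by
  have hdiag (m : Fin n) : T.val m m * T⁻¹.val m m ≠ 0 := by
    rw [blockTriangular_units_apply_self_mul_inv hb hT]
    exact one_ne_zero
  rw [hμ.structConst_act_leading hT h]
  exact mul_ne_zero (mul_ne_zero (mul_ne_zero (left_ne_zero_of_mul (hdiag k))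
    (right_ne_zero_of_mul (hdiag i))) (right_ne_zero_of_mul (hdiag j))) hijk

theorem IsEinsteinNilradical.exists_triangular_gauge (hμ : IsBilin μ) (hb : b.Injective)
    (hder : ∀ D, IsDerivation μ D → D.BlockTriangular b) (h : IsEinsteinNilradical μ) :
    ∃ (T : GL (Fin n) ℝ) (c : ℝ) (D : Matrix (Fin n) (Fin n) ℝ), T.val.BlockTriangular b ∧
      IsDerivation μ D ∧ momentMap (act T μ) = diagonal fun i => c + D i i := by
  obtain ⟨g, c, φ, -, hsymm, hφ, hm⟩ := h
  obtain ⟨K, hK, hT⟩ := exists_orthogonal_mul_blockTriangular hb g.val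
  set D := g⁻¹.val * φ * g.val
  have hD : IsDerivation μ D := hφ.of_act
  have hconj : (K * g).val * D * (K * g)⁻¹.val = K.val * φ * K⁻¹.val := by
    simp [D, Matrix.mul_assoc]
  have hdiag : K.val * φ * K⁻¹.val = diagonal fun i => D i i := by
    have htri : (K.val * φ * K⁻¹.val).BlockTriangular b := by
      rw [← hconj]
      exact (hT.mul (hder D hD)).mul (blockTriangular_units_inv hT)
    have hsymm' : (K.val * φ * K⁻¹.val).IsSymm := by
      rw [units_inv_eq_transpose hK]
      simp only [Matrix.IsSymm, transpose_mul, transpose_transpose, hsymm.eq, Matrix.mul_assoc]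
    rw [← (isDiag_of_blockTriangular_of_isSymm hb htri hsymm').diagonal_diag, ← hconj]
    exact congrArg diagonal <| funext fun i => blockTriangular_conj_apply_self hb hT (hder D hD) i
  refine ⟨K * g, c, D, hT, hD, ?_⟩
  rw [act_mul, (hμ.act g).momentMap_act_of_orthogonal hK, hm, Matrix.mul_add, Matrix.add_mul,
    hdiag, Matrix.mul_smul, Matrix.smul_mul, Matrix.mul_one, Units.mul_inv, smul_one_eq_diagonal,
    diagonal_add]

end TriangularAction

section DiagonalDerivations

variable {μ : Law n} {a : Fin n → ℝ}

theorem IsBilin.isDerivation_diagonal (hμ : IsBilin μ)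
    (h : ∀ i j k, (a k - a i - a j) * structConst μ i j k = 0) :
    IsDerivation μ (diagonal a) := by
  intro X Y
  funext k
  simp only [mulVec_diagonal, Pi.add_apply, hμ.apply_eq_sum, Finset.mul_sum,
    ← Finset.sum_add_distrib]
  refine Finset.sum_congr rfl fun i _ => Finset.sum_congr rfl fun j _ => ?_
  linear_combination X i * Y j * h i j k

theorem isDerivation_diagonal_of_sum_mul_momentMap_eq_zero (hbil : IsBilin μ) (hskew : IsSkew μ)
    (hweight : ∀ i j k, structConst μ i j k ≠ 0 → a k ≤ a i + a j)
    (hsum : ∑ k, a k * momentMap μ k k = 0) : IsDerivation μ (diagonal a) := by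
  have hterm (i j k : Fin n) : (a k - a i - a j) * structConst μ i j k ^ 2 ≤ 0 := by
    rcases eq_or_ne (structConst μ i j k) 0 with h | h
    · simp [h]
    · exact mul_nonpos_of_nonpos_of_nonneg (by linarith [hweight i j k h]) (sq_nonneg _)
  rw [hskew.sum_mul_momentMap_diag] at hsum
  refine hbil.isDerivation_diagonal fun i j k => ?_
  have hij := (Finset.sum_eq_zero_iff_of_nonpos fun i _ =>
    Finset.sum_nonpos fun j _ => Finset.sum_nonpos fun k _ => hterm i j k).1 hsum i (by simp)
  have hj := (Finset.sum_eq_zero_iff_of_nonpos fun j _ =>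
    Finset.sum_nonpos fun k _ => hterm i j k).1 hij j (by simp)
  have hk := (Finset.sum_eq_zero_iff_of_nonpos fun k _ => hterm i j k).1 hj k (by simp)
  simpa using hk

end DiagonalDerivations

section Law22

theorem isBilin_law22 : IsBilin law22 := isBilin_mkLaw c22

theorem isSkew_law22 : IsSkew law22 := isSkew_mkLaw c22

theorem law22_apply (X Y : Fin 7 → ℝ) :
    law22 X Y = ![0, 0, 0, X 1 * Y 2 - X 2 * Y 1, X 0 * Y 1 - X 1 * Y 0, X 0 * Y 2 - X 2 * Y 0,
      2 * (X 0 * Y 3 - X 3 * Y 0) + (X 1 * Y 5 - X 5 * Y 1) - (X 2 * Y 4 - X 4 * Y 2) +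
        (X 2 * Y 5 - X 5 * Y 2)] := by
  funext k
  fin_cases k <;> simp [law22, mkLaw, c22, Fin.sum_univ_seven] <;> ring

section Derivations

theorem law22_bVec (i j : Fin 7) : law22 (bVec i) (bVec j) = c22 i j - c22 j i :=
  funext (structConst_mkLaw c22 i j)

variable {D : Matrix (Fin 7) (Fin 7) ℝ}

theorem IsDerivation.law22_col_three (hD : IsDerivation law22 D) :
    D.col 3 = ![0, 0, 0, D 1 1 + D 2 2, -D 0 2, D 0 1, D 4 1 - D 5 1 + D 5 2] :=
  calc D.col 3 = D *ᵥ law22 (bVec 1) (bVec 2) := by simp [law22_bVec, c22]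
    _ = law22 (D.col 1) (bVec 2) + law22 (bVec 1) (D.col 2) := hD.mulVec_bracket 1 2
    _ = _ := by ext k; fin_cases k <;> simp [law22_apply, bVec]; ring

theorem IsDerivation.law22_col_four (hD : IsDerivation law22 D) :
    D.col 4 = ![0, 0, 0, -D 2 0, D 0 0 + D 1 1, D 2 1, -D 5 0 + 2 * D 3 1] :=
  calc D.col 4 = D *ᵥ law22 (bVec 0) (bVec 1) := by simp [law22_bVec, c22]
    _ = law22 (D.col 0) (bVec 1) + law22 (bVec 0) (D.col 1) := hD.mulVec_bracket 0 1
    _ = _ := by ext k; fin_cases k <;> simp [law22_apply, bVec]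

theorem IsDerivation.law22_col_five (hD : IsDerivation law22 D) :
    D.col 5 = ![0, 0, 0, D 1 0, D 1 2, D 0 0 + D 2 2, D 4 0 - D 5 0 + 2 * D 3 2] :=
  calc D.col 5 = D *ᵥ law22 (bVec 0) (bVec 2) := by simp [law22_bVec, c22]
    _ = law22 (D.col 0) (bVec 2) + law22 (bVec 0) (D.col 2) := hD.mulVec_bracket 0 2
    _ = _ := by ext k; fin_cases k <;> simp [law22_apply, bVec]; ring

theorem IsDerivation.law22_col_six (hD : IsDerivation law22 D) :
    D.col 6 = ![0, 0, 0, 0, 0, 0, D 1 1 + D 2 1 + (D 0 0 + D 2 2)] :=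
  calc D.col 6 = D *ᵥ law22 (bVec 1) (bVec 5) := by simp [law22_bVec, c22]
    _ = law22 (D.col 1) (bVec 5) + law22 (bVec 1) (D.col 5) := hD.mulVec_bracket 1 5
    _ = _ := by
      rw [hD.law22_col_five]
      ext k; fin_cases k <;> simp [law22_apply, bVec]

theorem IsDerivation.law22_apply_two_zero (hD : IsDerivation law22 D) : D 2 0 = 0 := by
  have h := hD.mulVec_bracket 0 4
  rw [law22_bVec, hD.law22_col_four] at h
  have h6 : 0 = -D 2 0 + 2 * -D 2 0 := by
    simpa [c22, law22_apply, bVec] using congrFun h 6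
  linarith

theorem IsDerivation.law22_apply_zero_one (hD : IsDerivation law22 D) : D 0 1 = 0 := by
  have h := hD.mulVec_bracket 1 3
  rw [law22_bVec, hD.law22_col_three] at h
  have h6 : 0 = 2 * D 0 1 + D 0 1 := by
    simpa [c22, law22_apply, bVec] using congrFun h 6
  linarith

theorem IsDerivation.law22_apply_two_one (hD : IsDerivation law22 D) : D 2 1 = 0 := by
  have h66 : D 6 6 = D 1 1 + D 2 1 + (D 0 0 + D 2 2) := congrFun hD.law22_col_six 6
  have h := hD.mulVec_bracket 0 3
  rw [law22_bVec, hD.law22_col_three] at h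
  have h6 : D 6 6 * 2 = 2 * D 0 0 + 2 * (D 1 1 + D 2 2) := by
    simpa [c22, law22_apply, bVec] using congrFun h 6
  linarith

theorem IsDerivation.law22_apply_one_one_eq (hD : IsDerivation law22 D) : D 1 1 = D 2 2 := by
  have h66 : D 6 6 = D 1 1 + D 2 1 + (D 0 0 + D 2 2) := congrFun hD.law22_col_six 6
  have h := hD.mulVec_bracket 2 5
  rw [law22_bVec, hD.law22_col_five] at h
  have h6 : D 6 6 = D 1 2 + D 2 2 + (-D 1 2 + (D 0 0 + D 2 2)) := by
    simpa [c22, law22_apply, bVec] using congrFun h 6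
  linarith [hD.law22_apply_two_one]

theorem IsDerivation.law22_apply_four_four_eq (hD : IsDerivation law22 D) : D 4 4 = D 5 5 := by
  have h4 : D 4 4 = D 0 0 + D 1 1 := congrFun hD.law22_col_four 4
  have h5 : D 5 5 = D 0 0 + D 2 2 := congrFun hD.law22_col_five 5
  rw [h4, h5, hD.law22_apply_one_one_eq]

/-- Position of each basis vector in a full flag preserved by every derivation of `law22`: the
flag is spanned successively by `e_6, e_4, e_3, e_5, e_1, e_0, e_2` (indices from `0`). -/
def flagRank22 : Fin 7 → ℕ := ![5, 4, 6, 2, 1, 3, 0]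

theorem flagRank22_injective : flagRank22.Injective := by decide

theorem IsDerivation.blockTriangular_flagRank22 (hD : IsDerivation law22 D) :
    D.BlockTriangular flagRank22 := by
  have h3 (k : Fin 7) := congrFun hD.law22_col_three k
  have h4 (k : Fin 7) := congrFun hD.law22_col_four k
  have h5 (k : Fin 7) := congrFun hD.law22_col_five k
  have h6 (k : Fin 7) := congrFun hD.law22_col_six k
  simp only [Matrix.col_apply] at h3 h4 h5 h6
  intro i j hij
  fin_cases j <;> fin_cases i <;> first
    | exact absurd hij (by decide)
    | simp [h3, h4, h5, h6, hD.law22_apply_two_zero, hD.law22_apply_zero_one,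
        hD.law22_apply_two_one]

end Derivations

section TriangularGauge

/-- The triples `(i, j, k)`, with `i` and `j` in either order, for which `e_k` occurs in the
bracket `[e_i, e_j]` of `law22`. -/
def bracketTriples22 : List (Fin 7 × Fin 7 × Fin 7) :=
  [(0, 1, 4), (0, 2, 5), (0, 3, 6), (1, 2, 3), (1, 5, 6), (2, 4, 6), (2, 5, 6),
    (1, 0, 4), (2, 0, 5), (3, 0, 6), (2, 1, 3), (5, 1, 6), (4, 2, 6), (5, 2, 6)]

theorem mem_bracketTriples22_of_c22_ne_zero {i j k : Fin 7} (h : c22 i j k ≠ 0) :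
    (i, j, k) ∈ bracketTriples22 ∧ (j, i, k) ∈ bracketTriples22 := by
  unfold c22 at h
  split_ifs at h <;> simp_all [Pi.single_apply, bracketTriples22]

theorem mem_bracketTriples22 {i j k : Fin 7} (h : structConst law22 i j k ≠ 0) :
    (i, j, k) ∈ bracketTriples22 := by
  rw [law22, structConst_mkLaw] at h
  rcases ne_or_eq (c22 i j k) 0 with hij | hij
  · exact (mem_bracketTriples22_of_c22_ne_zero hij).1
  · exact (mem_bracketTriples22_of_c22_ne_zero fun hji => h (by rw [hij, hji, sub_zero])).2

/-- The triples of `bracketTriples22` that can contribute to the structure constant `(i, j, k)` of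
`act T law22` when `T` is triangular with respect to the flag `flagRank22`. -/
def contributingTriples22 (i j k : Fin 7) : List (Fin 7 × Fin 7 × Fin 7) :=
  bracketTriples22.filter fun t => flagRank22 t.1 ≤ flagRank22 i ∧
    flagRank22 t.2.1 ≤ flagRank22 j ∧ flagRank22 k ≤ flagRank22 t.2.2

theorem mem_contributingTriples22 {i j k p q l : Fin 7} (h : structConst law22 p q l ≠ 0)
    (hi : flagRank22 p ≤ flagRank22 i) (hj : flagRank22 q ≤ flagRank22 j)
    (hk : flagRank22 k ≤ flagRank22 l) : (p, q, l) ∈ contributingTriples22 i j k :=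
  List.mem_filter.2 ⟨mem_bracketTriples22 h, decide_eq_true ⟨hi, hj, hk⟩⟩

variable {T : GL (Fin 7) ℝ}

theorem structConst_act_law22_eq_zero (hT : T.val.BlockTriangular flagRank22) {i j k : Fin 7}
    (h : contributingTriples22 i j k = []) : structConst (act T law22) i j k = 0 :=
  isBilin_law22.structConst_act_eq_zero hT fun _ _ _ hc hi hj hk =>
    List.ne_nil_of_mem (mem_contributingTriples22 hc hi hj hk) h

theorem structConst_act_law22_ne_zero (hT : T.val.BlockTriangular flagRank22) {i j k : Fin 7}
    (hijk : structConst law22 i j k ≠ 0) (h : contributingTriples22 i j k = [(i, j, k)]) :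
    structConst (act T law22) i j k ≠ 0 :=
  isBilin_law22.structConst_act_ne_zero flagRank22_injective hT hijk fun _ _ _ hc hi hj hk =>
    List.mem_singleton.1 (h ▸ mem_contributingTriples22 hc hi hj hk)

theorem structConst_act_law22_six (hT : T.val.BlockTriangular flagRank22) (i j : Fin 7) :
    structConst (act T law22) 6 i j = 0 :=
  structConst_act_law22_eq_zero hT (by decide +revert)

theorem sum_structConst_act_law22_mul_six_eq_zero (hT : T.val.BlockTriangular flagRank22)
    (hm : (momentMap (act T law22)).IsDiag) {k : Fin 7} (hk : k ≠ 6) :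
    ∑ i, ∑ j, structConst (act T law22) i j k * structConst (act T law22) i j 6 = 0 := by
  rw [← momentMap_apply_of_central (structConst_act_law22_six hT), hm hk]

theorem structConst_act_law22_zero_two_six (hT : T.val.BlockTriangular flagRank22)
    (hm : (momentMap (act T law22)).IsDiag) : structConst (act T law22) 0 2 6 = 0 := by
  have hskew := isSkew_law22.act T
  have hleading : structConst (act T law22) 0 2 5 ≠ 0 :=
    structConst_act_law22_ne_zero hT (by simp [law22, structConst_mkLaw, c22]) (by decide)
  have hprod : 2 * (structConst (act T law22) 0 2 5 * structConst (act T law22) 0 2 6) = 0 := by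
    rw [← sum_structConst_act_law22_mul_six_eq_zero hT hm (show (5 : Fin 7) ≠ 6 by decide)]
    simp (disch := decide) only [Fin.sum_univ_seven, structConst_act_law22_eq_zero hT,
      hskew.structConst_self, hskew.structConst_swap 0 2, mul_zero, zero_mul, neg_mul_neg, add_zero,
      zero_add]
    ring
  simpa [hleading] using hprod

theorem structConst_act_law22_one_two_six (hT : T.val.BlockTriangular flagRank22)
    (hm : (momentMap (act T law22)).IsDiag) : structConst (act T law22) 1 2 6 = 0 := by
  have hskew := isSkew_law22.act T
  have hleading : structConst (act T law22) 1 2 3 ≠ 0 :=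
    structConst_act_law22_ne_zero hT (by simp [law22, structConst_mkLaw, c22]) (by decide)
  have hprod : 2 * (structConst (act T law22) 1 2 3 * structConst (act T law22) 1 2 6) = 0 := by
    rw [← sum_structConst_act_law22_mul_six_eq_zero hT hm (show (3 : Fin 7) ≠ 6 by decide)]
    simp (disch := decide) only [Fin.sum_univ_seven, structConst_act_law22_eq_zero hT,
      hskew.structConst_self, hskew.structConst_swap 0 2, hskew.structConst_swap 1 2,
      structConst_act_law22_zero_two_six hT hm, mul_zero, zero_mul, neg_zero, neg_mul_neg, add_zero,
      zero_add]
    ring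
  simpa [hleading] using hprod

theorem structConst_act_law22_zero_one_six (hT : T.val.BlockTriangular flagRank22)
    (hm : (momentMap (act T law22)).IsDiag) : structConst (act T law22) 0 1 6 = 0 := by
  have hskew := isSkew_law22.act T
  have hleading : structConst (act T law22) 0 1 4 ≠ 0 :=
    structConst_act_law22_ne_zero hT (by simp [law22, structConst_mkLaw, c22]) (by decide)
  have hprod : 2 * (structConst (act T law22) 0 1 4 * structConst (act T law22) 0 1 6) = 0 := by
    rw [← sum_structConst_act_law22_mul_six_eq_zero hT hm (show (4 : Fin 7) ≠ 6 by decide)]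
    simp (disch := decide) only [Fin.sum_univ_seven, structConst_act_law22_eq_zero hT,
      hskew.structConst_self, hskew.structConst_swap 0 1, hskew.structConst_swap 0 2,
      hskew.structConst_swap 1 2, structConst_act_law22_zero_two_six hT hm,
      structConst_act_law22_one_two_six hT hm, mul_zero, zero_mul, neg_zero, neg_mul_neg, add_zero,
      zero_add]
    ring
  simpa [hleading] using hprod

end TriangularGauge

section TestWeight

/-- Diagonal entries of the matrix against which the Einstein condition for `law22` is tested. It
is a derivation of the law obtained from `law22` by dropping the bracket `[e_2, e_5] = e_6`, but not
of `law22`. The entries are integers so that comparisons between them are decidable. -/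
def weight22 : Fin 7 → ℤ := ![0, -1, 1, 0, -1, 1, 0]

variable {T : GL (Fin 7) ℝ} {D : Matrix (Fin 7) (Fin 7) ℝ}

theorem weight22_le_of_contributingTriples22_ne_nil : ∀ i j k : Fin 7,
    contributingTriples22 i j k ≠ [] → i ≠ j → (i, j, k) ≠ (0, 1, 6) → (i, j, k) ≠ (1, 0, 6) →
      weight22 k ≤ weight22 i + weight22 j := by
  decide +kernel

theorem weight22_le_of_structConst_act_law22_ne_zero (hT : T.val.BlockTriangular flagRank22)
    (hm : (momentMap (act T law22)).IsDiag) {i j k : Fin 7}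
    (h : structConst (act T law22) i j k ≠ 0) :
    (weight22 k : ℝ) ≤ weight22 i + weight22 j := by
  have h016 := structConst_act_law22_zero_one_six hT hm
  have h106 : structConst (act T law22) 1 0 6 = 0 := by
    rw [(isSkew_law22.act T).structConst_swap, h016, neg_zero]
  have hZ := weight22_le_of_contributingTriples22_ne_nil i j k
    (mt (structConst_act_law22_eq_zero hT) h)
    (by rintro rfl; exact h ((isSkew_law22.act T).structConst_self i k))
    (by rintro ⟨⟩; exact h h016) (by rintro ⟨⟩; exact h h106)
  exact_mod_cast hZ

theorem IsDerivation.sum_weight22_mul (hD : IsDerivation law22 D) (c : ℝ) :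
    ∑ k, (weight22 k : ℝ) * (c + D k k) = 0 := by
  simp [Fin.sum_univ_seven, weight22, hD.law22_apply_one_one_eq, hD.law22_apply_four_four_eq]

theorem not_isDerivation_act_law22_diagonal_weight22 (hT : T.val.BlockTriangular flagRank22) :
    ¬IsDerivation (act T law22) (diagonal fun k => (weight22 k : ℝ)) := by
  intro h
  have heq := h.of_act.law22_apply_one_one_eq
  have hconj (i : Fin 7) :
      (T⁻¹.val * diagonal (fun k => (weight22 k : ℝ)) * T.val) i i = weight22 i := by
    simpa using blockTriangular_conj_apply_self flagRank22_injective
      (blockTriangular_units_inv hT) (blockTriangular_diagonal fun k => (weight22 k : ℝ)) i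
  rw [hconj, hconj, Int.cast_inj] at heq
  exact absurd heq (by decide)

end TestWeight

end Law22

/-- `g_{2.2}` is not an Einstein nilradical. -/
theorem stmt_12 : ¬ IsEinsteinNilradical law22 := by
  intro h
  obtain ⟨T, c, D, hT, hD, hm⟩ := h.exists_triangular_gauge isBilin_law22 flagRank22_injective
    fun _ hD => hD.blockTriangular_flagRank22
  have hdiag : (momentMap (act T law22)).IsDiag := hm ▸ isDiag_diagonal _
  have hsum : ∑ k, (weight22 k : ℝ) * momentMap (act T law22) k k = 0 := by
    simpa only [hm, diagonal_apply_eq] using hD.sum_weight22_mul c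
  exact not_isDerivation_act_law22_diagonal_weight22 hT <|
    isDerivation_diagonal_of_sum_mul_momentMap_eq_zero (isBilin_law22.act T) (isSkew_law22.act T)
      (fun _ _ _ => weight22_le_of_structConst_act_law22_ne_zero hT hdiag) hsum
end
end

section
/- For every λ ∈ ℝ with λ ≠ 0 and λ ≠ 1, the 7-dimensional nilpotent Lie algebra g_{3.1(i_λ)} is an Einstein nilradical. -/
open Matrix BigOperators Polynomial

noncomputable section

/-- structure constants of `g_{3.1(i_λ)}`. -/
def c31 (lam : ℝ) : Fin 7 → Fin 7 → Fin 7 → ℝ := fun i j =>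
  if i = 0 ∧ j = 1 then Pi.single 3 1
  else if i = 0 ∧ j = 2 then Pi.single 4 1
  else if i = 0 ∧ j = 5 then Pi.single 6 1
  else if i = 1 ∧ j = 2 then Pi.single 5 1
  else if i = 1 ∧ j = 4 then Pi.single 6 lam
  else if i = 2 ∧ j = 3 then Pi.single 6 (lam - 1)
  else 0

/-- the Lie algebra law of `g_{3.1(i_λ)}`. -/
def law31 (lam : ℝ) : Law 7 := mkLaw (c31 lam)

/-!
Give the generators `e_1, e_2, e_3` three independent degrees. Every bracket of basis vectors is
then homogeneous, and the seven basis vectors have pairwise distinct degrees. This grading survives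
every diagonal change of basis, with two consequences. The moment map is a diagonal matrix, since
its `(k, l)` entry pairs structure constants that are simultaneously nonzero only if `e_k` and `e_l`
have equal degree; and every additive function of the degree is a diagonal derivation. It remains to
solve the diagonal equations. Rescaling only `e_4` and `e_5`, by `p` and `q`, turns the structure
constants `1, 1, λ, λ - 1` of `[e_1, e_2]`, `[e_1, e_3]`, `[e_2, e_5]`, `[e_3, e_4]` into
`p, q, λ / q, (λ - 1) / p`, and the equations hold as soon as `(λ / q)² = q²` and
`((λ - 1) / p)² = p²`, with derivation proportional to the total degree.
-/

section MomentMap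

variable {n : ℕ}

/-- The diagonal matrix with unit entries `d`, as an element of `GL_n(ℝ)`. -/
def diagonalGL (d : Fin n → ℝˣ) : GL (Fin n) ℝ :=
  Units.map (diagonalRingHom (Fin n) ℝ).toMonoidHom (MulEquiv.piUnits.symm d)

lemma coe_diagonalGL (d : Fin n → ℝˣ) :
    (diagonalGL d : Matrix (Fin n) (Fin n) ℝ) = diagonal fun i => (d i : ℝ) := rfl

lemma coe_inv_diagonalGL (d : Fin n → ℝˣ) :
    (((diagonalGL d)⁻¹ : GL (Fin n) ℝ) : Matrix (Fin n) (Fin n) ℝ) =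
      diagonal fun i => (d i : ℝ)⁻¹ := by
  rw [diagonalGL, ← map_inv, ← map_inv]
  simp only [← Units.val_inv_eq_inv_val]
  rfl

/-- The structure constants obtained from `c` when each basis vector `e_i` is replaced by
`d_i⁻¹ e_i`. -/
def rescaleConstants (d : Fin n → ℝˣ) (c : Fin n → Fin n → Fin n → ℝ) : Fin n → Fin n → Fin n → ℝ :=
  fun i j k => d k / (d i * d j) * c i j k

lemma mkLaw_bVec (c : Fin n → Fin n → Fin n → ℝ) (i j k : Fin n) :
    mkLaw c (bVec i) (bVec j) k = c i j k - c j i k := by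
  simp [mkLaw, bVec, Pi.single_apply]

lemma act_diagonalGL_mkLaw (d : Fin n → ℝˣ) (c : Fin n → Fin n → Fin n → ℝ) :
    act (diagonalGL d) (mkLaw c) = mkLaw (rescaleConstants d c) := by
  funext X Y k
  simp only [act, mkLaw, rescaleConstants, coe_diagonalGL, coe_inv_diagonalGL, mulVec_diagonal,
    Finset.mul_sum]
  refine Finset.sum_congr rfl fun i _ => Finset.sum_congr rfl fun j _ => ?_
  field_simp

lemma momentMap_mkLaw_apply_self (c : Fin n → Fin n → Fin n → ℝ) (k : Fin n) :
    momentMap (mkLaw c) k k =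
      ∑ i, ∑ j, (c i j k - c j i k) ^ 2 - 2 * ∑ i, ∑ j, (c k i j - c i k j) ^ 2 := by
  simp only [momentMap, of_apply, mkLaw_bVec, ← sq]
  ring

end MomentMap

section Grading

variable {n : ℕ} {A : Type*} [AddCommMonoid A]

/-- The structure constants `c` are homogeneous for the grading in which the basis vector `e_i` has
degree `w i`: whenever `e_k` occurs in `[e_i, e_j]`, its degree is the sum of theirs. -/
def IsGradedBy (c : Fin n → Fin n → Fin n → ℝ) (w : Fin n → A) : Prop :=
  ∀ i j k, c i j k ≠ 0 → w i + w j = w k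

namespace IsGradedBy

variable {c : Fin n → Fin n → Fin n → ℝ} {w : Fin n → A}

lemma rescale (hc : IsGradedBy c w) (d : Fin n → ℝˣ) : IsGradedBy (rescaleConstants d c) w :=
  fun i j k h => hc i j k (right_ne_zero_of_mul h)

lemma add_eq_of_mkLaw_bVec_ne_zero (hc : IsGradedBy c w) {i j k : Fin n}
    (h : mkLaw c (bVec i) (bVec j) k ≠ 0) : w i + w j = w k := by
  rw [mkLaw_bVec] at h
  by_contra hw
  have hij : c i j k = 0 := not_not.1 (mt (hc i j k) hw)
  have hji : c j i k = 0 := not_not.1 (mt (hc j i k) (by rwa [add_comm]))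
  simp [hij, hji] at h

lemma isDerivation_diagonal (hc : IsGradedBy c w) (f : A →+ ℝ) :
    IsDerivation (mkLaw c) (diagonal (f ∘ w)) := by
  intro X Y
  funext k
  simp only [mkLaw, mulVec_diagonal, Pi.add_apply, Function.comp_apply, Finset.mul_sum,
    ← Finset.sum_add_distrib]
  refine Finset.sum_congr rfl fun i _ => Finset.sum_congr rfl fun j _ => ?_
  have hfw : (f (w k) - f (w i) - f (w j)) * (c i j k - c j i k) = 0 := by
    by_cases h : c i j k - c j i k = 0
    · rw [h, mul_zero]
    · rw [← hc.add_eq_of_mkLaw_bVec_ne_zero (by rwa [mkLaw_bVec]), map_add]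
      ring
  linear_combination X i * Y j * hfw

lemma isDiag_momentMap [IsRightCancelAdd A] (hc : IsGradedBy c w) (hw : Function.Injective w) :
    (momentMap (mkLaw c)).IsDiag := by
  intro k l hkl
  have source (i j) : mkLaw c (bVec k) (bVec i) j * mkLaw c (bVec l) (bVec i) j = 0 := by
    by_contra h
    have hk := hc.add_eq_of_mkLaw_bVec_ne_zero (left_ne_zero_of_mul h)
    have hl := hc.add_eq_of_mkLaw_bVec_ne_zero (right_ne_zero_of_mul h)
    exact hkl (hw (add_right_cancel (hk.trans hl.symm)))
  have target (i j) : mkLaw c (bVec i) (bVec j) k * mkLaw c (bVec i) (bVec j) l = 0 := by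
    by_contra h
    have hk := hc.add_eq_of_mkLaw_bVec_ne_zero (left_ne_zero_of_mul h)
    have hl := hc.add_eq_of_mkLaw_bVec_ne_zero (right_ne_zero_of_mul h)
    exact hkl (hw (hk.symm.trans hl))
  simp [momentMap, source, target]

theorem isEinsteinNilradical_mkLaw [IsRightCancelAdd A] (hc : IsGradedBy c w)
    (hw : Function.Injective w) (d : Fin n → ℝˣ) (f : A →+ ℝ) {b : ℝ} (hb : b < 0)
    (hm : ∀ k, momentMap (mkLaw (rescaleConstants d c)) k k = b + f (w k)) :
    IsEinsteinNilradical (mkLaw c) := by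
  refine ⟨diagonalGL d, b, diagonal (f ∘ w), hb, isSymm_diagonal _, ?_, ?_⟩
  · rw [act_diagonalGL_mkLaw]
    exact (hc.rescale d).isDerivation_diagonal f
  · rw [act_diagonalGL_mkLaw, ← ((hc.rescale d).isDiag_momentMap hw).diagonal_diag,
      smul_one_eq_diagonal, diagonal_add]
    exact congrArg diagonal (funext hm)

end IsGradedBy

end Grading

/-- The degrees of `e_1, ..., e_7` for the maximal torus of derivations of `g_{3.1(i_λ)}`. A degree
is the multiset of the generators `e_1, e_2, e_3` (indexed by `Fin 3`) entering an iterated bracket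
proportional to the basis vector. -/
def multidegree31 : Fin 7 → Multiset (Fin 3) :=
  ![{0}, {1}, {2}, {0, 1}, {0, 2}, {1, 2}, {0, 1, 2}]

lemma multidegree31_injective : Function.Injective multidegree31 := by decide

lemma isGradedBy_c31 (lam : ℝ) : IsGradedBy (c31 lam) multidegree31 := by
  intro i j k h
  simp only [c31, ite_apply, Pi.single_apply, Pi.zero_apply] at h
  split_ifs at h <;> simp_all only [ne_eq, not_true_eq_false] <;> decide

lemma momentMap_rescaleConstants_c31_apply_self (lam : ℝ) (p q : ℝˣ) (k : Fin 7) :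
    momentMap (mkLaw (rescaleConstants ![1, 1, 1, p, q, 1, 1] (c31 lam))) k k =
      (![-2 * (p ^ 2 + q ^ 2 + 1),
        -2 * (p ^ 2 + 1 + (lam / q) ^ 2),
        -2 * (q ^ 2 + 1 + ((lam - 1) / p) ^ 2),
        2 * (p ^ 2 - ((lam - 1) / p) ^ 2),
        2 * (q ^ 2 - (lam / q) ^ 2),
        0,
        2 * (1 + (lam / q) ^ 2 + ((lam - 1) / p) ^ 2)] : Fin 7 → ℝ) k := by
  rw [momentMap_mkLaw_apply_self]
  simp only [Fin.sum_univ_seven, rescaleConstants, c31]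
  fin_cases k <;> simp <;> ring

lemma momentMap_rescaleConstants_c31_apply_self_eq_add_card {lam : ℝ} {p q : ℝˣ}
    (hp : ((lam - 1) / p) ^ 2 = (p : ℝ) ^ 2) (hq : (lam / q) ^ 2 = (q : ℝ) ^ 2) (k : Fin 7) :
    momentMap (mkLaw (rescaleConstants ![1, 1, 1, p, q, 1, 1] (c31 lam))) k k =
      -4 * (p ^ 2 + q ^ 2 + 1) + 2 * (p ^ 2 + q ^ 2 + 1) * (multidegree31 k).card := by
  rw [momentMap_rescaleConstants_c31_apply_self, hp, hq]
  fin_cases k <;> simp [multidegree31] <;> ring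

lemma exists_units_div_sq_eq_sq {x : ℝ} (hx : x ≠ 0) : ∃ p : ℝˣ, (x / p) ^ 2 = (p : ℝ) ^ 2 := by
  have hx' : 0 < |x| := abs_pos.2 hx
  refine ⟨Units.mk0 √|x| (Real.sqrt_ne_zero'.2 hx'), ?_⟩
  rw [Units.val_mk0, div_pow, Real.sq_sqrt hx'.le, ← sq_abs, sq, mul_self_div_self]

/-- for every `λ ≠ 0, 1`, `g_{3.1(i_λ)}` is an Einstein nilradical. -/
theorem stmt_14 (lam : ℝ) (h0 : lam ≠ 0) (h1 : lam ≠ 1) :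
    IsEinsteinNilradical (law31 lam) := by
  obtain ⟨p, hp⟩ := exists_units_div_sq_eq_sq (sub_ne_zero.2 h1)
  obtain ⟨q, hq⟩ := exists_units_div_sq_eq_sq h0
  let s : ℝ := p ^ 2 + q ^ 2 + 1
  let f : Multiset (Fin 3) →+ ℝ :=
    (AddMonoidHom.mulLeft (2 * s)).comp ((Nat.castAddMonoidHom ℝ).comp Multiset.cardHom)
  have hb : -4 * s < 0 := mul_neg_of_neg_of_pos (by norm_num) (by positivity)
  exact (isGradedBy_c31 lam).isEinsteinNilradical_mkLaw multidegree31_injective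
    ![1, 1, 1, p, q, 1, 1] f hb (momentMap_rescaleConstants_c31_apply_self_eq_add_card hp hq)
end
end
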